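/- Let G be a 3-regular simple graph of girth at least 8 such that G does not contain two cycles of length 8 whose intersection is a path of length 2. Then the cop number of G is at least 4. -/

import Mathlib

/-- `copsWin G c` : in the game of cops and robbers on `G`, `c` cops have a winning
strategy. The cops choose initial positions `init` and a move function `F` (each cop
stays put or moves along an edge). The robber then chooses an initial position (knowing
the cops' placement) and a move function (staying put or moving along an edge); cops
move first on each turn. The cops win if at some time a cop occupies the robber's
current vertex. -/
def copsWin {V : Type*} (G : SimpleGraph V) (c : ℕ) : Prop :=
  ∃ (init : Fin c → V) (F : (Fin c → V) → V → (Fin c → V)),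
    (∀ (p : Fin c → V) (r : V) (i : Fin c), F p r i = p i ∨ G.Adj (p i) (F p r i)) ∧
    ∀ (rinit : (Fin c → V) → V) (rmove : (Fin c → V) → V → V),
      (∀ (p : Fin c → V) (r : V), rmove p r = r ∨ G.Adj r (rmove p r)) →
      ∀ (cseq : ℕ → Fin c → V) (rseq : ℕ → V),
        cseq 0 = init → rseq 0 = rinit init →
        (∀ t, cseq (t + 1) = F (cseq t) (rseq t)) →
        (∀ t, rseq (t + 1) = rmove (cseq (t + 1)) (rseq t)) →
        ∃ (t : ℕ) (i : Fin c), cseq t i = rseq t ∨ cseq (t + 1) i = rseq t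

/-- The cop number of `G`: the least number of cops having a winning strategy. -/
noncomputable def copNumber {V : Type*} (G : SimpleGraph V) : ℕ :=
  sInf {c | copsWin G c}

open SimpleGraph in
theorem nb_isPath {V : Type*} {G : SimpleGraph V} (hg : 8 ≤ G.girth) {u v : V}
    (p : G.Walk u v) (hl : p.length ≤ 7) (hc : p.edges.IsChain (· ≠ ·)) : p.IsPath := by
  classical
  let H : SimpleGraph V := SimpleGraph.fromEdgeSet {e | e ∈ p.edges}
  have hHG : H ≤ G := by
    intro a b hab
    have := (SimpleGraph.fromEdgeSet_adj _).1 hab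
    exact p.adj_of_mem_edges this.1
  have hp : ∀ e ∈ p.edges, e ∈ H.edgeSet := by
    intro e he
    induction e with
    | _ a b => exact (SimpleGraph.fromEdgeSet_adj _).2 ⟨he, (p.adj_of_mem_edges he).ne⟩
  have hac : H.IsAcyclic := by
    intro w c hcyc
    have h1 : (c.mapLe hHG).IsCycle := hcyc.mapLe hHG
    have h2 := SimpleGraph.girth_le_length h1
    have h3 : c.edges.Subperm p.edges := by
      apply List.Nodup.subperm hcyc.edges_nodup
      intro e he
      have := c.edges_subset_edgeSet he
      induction e with
      | _ a b => exact ((SimpleGraph.fromEdgeSet_adj _).1 this).1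
    have h4 := h3.length_le
    simp at h2 h4
    omega
  have h5 : (p.transfer H hp).IsPath := by
    rw [hac.isPath_iff_isChain]
    simpa using hc
  have h6 := h5.support_nodup
  rw [Walk.support_transfer] at h6
  exact Walk.IsPath.mk' h6

/-- `TT G k r a z`: `z` is reached by a non-backtracking walk `r, a, …` of length at most `k`. -/
def TT {V : Type*} (G : SimpleGraph V) : ℕ → V → V → V → Prop
  | 0, _, _, _ => False
  | k + 1, r, a, z => z = a ∨ ∃ w, G.Adj a w ∧ w ≠ r ∧ TT G k a w z

theorem TT.walk {V : Type*} {G : SimpleGraph V} {k : ℕ} : ∀ {r a z : V}, TT G k r a z →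
    ∃ q : G.Walk a z, q.length + 1 ≤ k ∧ (s(r, a) :: q.edges).IsChain (· ≠ ·) := by
  induction k with
  | zero => intro r a z h; exact h.elim
  | succ k ih =>
    rintro r a z (rfl | ⟨w, haw, hwr, h⟩)
    · exact ⟨.nil, by simp, by simp⟩
    · obtain ⟨q, hq, hc⟩ := ih h
      refine ⟨.cons haw q, by simp; omega, ?_⟩
      rw [SimpleGraph.Walk.edges_cons, List.isChain_cons_cons]
      refine ⟨?_, hc⟩
      have := haw.ne
      simp only [ne_eq, Sym2.eq_iff, not_or, not_and]
      grind

theorem TT.disj {V : Type*} {G : SimpleGraph V} (hg : 8 ≤ G.girth) {k l : ℕ} {r a b z : V}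
    (ha : G.Adj r a) (hb : G.Adj r b) (h1 : TT G k r a z) (h2 : TT G l r b z)
    (hab : a ≠ b) (hkl : k + l ≤ 7) : False := by
  obtain ⟨q1, hl1, hc1⟩ := h1.walk
  obtain ⟨q2, hl2, hc2⟩ := h2.walk
  have := nb_isPath hg ((SimpleGraph.Walk.cons ha q1).reverse.append (SimpleGraph.Walk.cons hb q2))
    (by simp; omega) (by
      rw [SimpleGraph.Walk.edges_append, SimpleGraph.Walk.edges_reverse, List.isChain_append]
      refine ⟨?_, by simpa using hc2, ?_⟩
      · rw [List.isChain_reverse]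
        simp only [SimpleGraph.Walk.edges_cons]
        exact hc1.imp (fun _ _ h => h.symm)
      · have := ha.ne
        have := hb.ne
        simp
        grind)
  have h := SimpleGraph.Walk.isPath_iff_nil.1 this
  have h' := SimpleGraph.Walk.length_eq_zero_iff.2 h
  simp at h'

theorem TT.mono {V : Type*} {G : SimpleGraph V} {k : ℕ} : ∀ {r a z : V}, TT G k r a z →
    TT G (k + 1) r a z := by
  induction k with
  | zero => intro r a z h; exact h.elim
  | succ k ih =>
    rintro r a z (h | ⟨w, haw, hwr, h⟩)
    · exact Or.inl h
    · exact Or.inr ⟨w, haw, hwr, ih h⟩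

theorem nbrs {V : Type*} [Fintype V] (G : SimpleGraph V) [DecidableRel G.Adj]
    (h3 : ∀ v : V, G.degree v = 3) {r c : V} (h : G.Adj r c) :
    ∃ a b, G.Adj r a ∧ G.Adj r b ∧ a ≠ b ∧ a ≠ c ∧ b ≠ c ∧
      ∀ x, G.Adj r x → x = a ∨ x = b ∨ x = c := by
  classical
  have := h3 r
  rw [← SimpleGraph.card_neighborFinset_eq_degree, Finset.card_eq_three] at this
  obtain ⟨x, y, z, hxy, hxz, hyz, hs⟩ := this
  have hm : ∀ w, G.Adj r w ↔ w = x ∨ w = y ∨ w = z := by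
    intro w
    rw [← SimpleGraph.mem_neighborFinset, hs]; simp
  rcases (hm c).1 h with rfl | rfl | rfl
  · exact ⟨y, z, by grind⟩
  · exact ⟨x, z, by grind⟩
  · exact ⟨x, y, by grind⟩

/-- Good positions for the robber (cops to move). -/
def GoodPos {V : Type*} (G : SimpleGraph V) {k : ℕ} (r : V) (p : Fin k → V) : Prop :=
  (∀ i, p i ≠ r ∧ ¬ G.Adj r (p i)) ∧ ∃ a, G.Adj r a ∧ ∀ i, ¬ TT G 3 r a (p i)

/-- Positions from which the robber can move to a good position. -/
def FreePos {V : Type*} (G : SimpleGraph V) {k : ℕ} (r : V) (p : Fin k → V) : Prop :=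
  (∀ i, p i ≠ r) ∧ ∃ a, G.Adj r a ∧ ∀ i, ¬ TT G 2 r a (p i)

theorem GoodPos.free {V : Type*} {G : SimpleGraph V} {k : ℕ} {r : V} {p p' : Fin k → V}
    (h : GoodPos G r p) (hm : ∀ i, p' i = p i ∨ G.Adj (p i) (p' i)) : FreePos G r p' := by
  obtain ⟨h1, a, ha, h2⟩ := h
  refine ⟨fun i hi => ?_, a, ha, fun i hi => ?_⟩
  · have := hm i
    have := h1 i
    grind [G.adj_comm]
  · have h3 := hm i
    have h4 := h1 i
    have h5 := h2 i
    simp only [TT] at hi h5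
    grind [G.adj_comm]

theorem exists_uncovered {V : Type*} [Fintype V] (G : SimpleGraph V) [DecidableRel G.Adj]
    (h3 : ∀ v : V, G.degree v = 3) (hg : 8 ≤ G.girth) [Nonempty V] {k : ℕ} (hk : k ≤ 3)
    (p : Fin k → V) : ∃ c, ∀ i, p i ≠ c ∧ ¬ G.Adj c (p i) := by
  by_contra! hcon
  obtain ⟨v⟩ := ‹Nonempty V›
  by_cases hv : ∃ i0 : Fin k, True
  swap
  · obtain ⟨i, _⟩ := hcon v
    exact hv ⟨i, trivial⟩
  obtain ⟨i0, -⟩ := hv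
  have key : ∀ x, G.Adj (p i0) x → ∃ i, i ≠ i0 ∧ TT G 3 (p i0) x (p i) := by
    intro x hx
    obtain ⟨y, _, hy, _, _, hyr, _⟩ := nbrs G h3 hx.symm
    obtain ⟨i, hi⟩ := hcon y
    refine ⟨i, ?_, ?_⟩
    · rintro rfl
      have := hi (Ne.symm hyr)
      exact TT.disj (k := 1) (l := 2) hg this.symm hx (z := y) (by simp [TT])
        (by simp only [TT]; grind) hy.ne' (by norm_num)
    · simp only [TT]
      grind
  obtain ⟨c, hc⟩ : ∃ c, G.Adj (p i0) c := by
    have := h3 (p i0)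
    exact (G.degree_pos_iff_exists_adj _).1 (by omega)
  obtain ⟨a, b, ha, hb, hab, hac, hbc, _⟩ := nbrs G h3 hc
  obtain ⟨i, hi, hi'⟩ := key a ha
  obtain ⟨j, hj, hj'⟩ := key b hb
  obtain ⟨l, hl, hl'⟩ := key c hc
  have h1 : i ≠ j := by rintro rfl; exact TT.disj hg ha hb hi' hj' hab (by norm_num)
  have h2 : i ≠ l := by rintro rfl; exact TT.disj hg ha hc hi' hl' hac (by norm_num)
  have h4 : j ≠ l := by rintro rfl; exact TT.disj hg hb hc hj' hl' hbc (by norm_num)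
  omega

theorem edge_aux {V : Type*} {G : SimpleGraph V} {c r b u v : V} (h : G.Adj u v)
    (n0 : ¬ G.Adj c b) (hu : u = c ∨ u = r ∨ u = b) (hv : v = c ∨ v = r ∨ v = b) :
    s(u, v) = s(r, c) ∨ s(u, v) = s(r, b) := by
  have n0' : ¬ G.Adj b c := fun h => n0 h.symm
  have hne := h.ne
  simp only [Sym2.eq_iff]
  grind

set_option maxHeartbeats 1000000 in
/-- Two 8-cycles through the path `c, r, b` with distinct continuations are excluded. -/
theorem no_config {V : Type*} (G : SimpleGraph V) (hg : 8 ≤ G.girth)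
    (hno : ¬ ∃ (v x y : V) (C C' : G.Walk v v),
      x ≠ y ∧ G.Adj v x ∧ G.Adj v y ∧
      C.IsCycle ∧ C'.IsCycle ∧ C.length = 8 ∧ C'.length = 8 ∧
      {e | e ∈ C.edges} ∩ {e | e ∈ C'.edges} = {s(v, x), s(v, y)} ∧
      {w | w ∈ C.support} ∩ {w | w ∈ C'.support} = {x, v, y})
    {r c b c1 c2 b1 b2 s s' t t' X Y : V} (hrc : G.Adj r c) (hrb : G.Adj r b) (hcb : c ≠ b)
    (hc1 : G.Adj c c1) (hc2 : G.Adj c c2) (hc1r : c1 ≠ r) (hc2r : c2 ≠ r) (hc12 : c1 ≠ c2)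
    (hb1 : G.Adj b b1) (hb2 : G.Adj b b2) (hb1r : b1 ≠ r) (hb2r : b2 ≠ r) (hb12 : b1 ≠ b2)
    (hs : G.Adj c1 s) (hsc : s ≠ c) (hsX : G.Adj s X) (hXc : X ≠ c1)
    (ht : G.Adj b1 t) (htb : t ≠ b) (htX : G.Adj t X) (hXb : X ≠ b1)
    (hs' : G.Adj c2 s') (hsc' : s' ≠ c) (hsY : G.Adj s' Y) (hYc : Y ≠ c2)
    (ht' : G.Adj b2 t') (htb' : t' ≠ b) (htY : G.Adj t' Y) (hYb : Y ≠ b2) : False := by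
  have t1 : ∀ u v : V, TT G 1 u v v := fun u v => Or.inl rfl
  have t2 : ∀ u v w : V, G.Adj v w → w ≠ u → TT G 2 u v w :=
    fun u v w h h' => Or.inr ⟨w, h, h', t1 _ _⟩
  have t3 : ∀ u v w x : V, G.Adj v w → w ≠ u → G.Adj w x → x ≠ v → TT G 3 u v x :=
    fun u v w x h h' k k' => Or.inr ⟨w, h, h', t2 _ _ _ k k'⟩
  have t4 : ∀ u v w x y : V, G.Adj v w → w ≠ u → G.Adj w x → x ≠ v → G.Adj x y → y ≠ w →
      TT G 4 u v y :=
    fun u v w x y h h' k k' m m' => Or.inr ⟨w, h, h', t3 _ _ _ _ k k' m m'⟩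
  have d : ∀ {k l : ℕ} {u v w : V} (z : V), G.Adj u v → G.Adj u w → v ≠ w → TT G k u v z →
    TT G l u w z → k + l ≤ 7 → False := fun z h1 h2 h3 h4 h5 h6 => TT.disj hg h1 h2 h4 h5 h3 h6
  -- `Sc x`/`Sb x`: level sets from r
  have lev : ∀ (k l : ℕ) (x y : V), TT G k r c x → TT G l r b y → k + l ≤ 7 → x ≠ y := by
    rintro k l x y h1 h2 h3 rfl
    exact d x hrc hrb hcb h1 h2 h3
  have cC1 := t1 r c
  have cc1 := t2 r c c1 hc1 hc1r
  have cc2 := t2 r c c2 hc2 hc2r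
  have cs := t3 r c c1 s hc1 hc1r hs hsc
  have cs' := t3 r c c2 s' hc2 hc2r hs' hsc'
  have cX := t4 r c c1 s X hc1 hc1r hs hsc hsX hXc
  have cY := t4 r c c2 s' Y hc2 hc2r hs' hsc' hsY hYc
  have bB1 := t1 r b
  have bb1 := t2 r b b1 hb1 hb1r
  have bb2 := t2 r b b2 hb2 hb2r
  have bt := t3 r b b1 t hb1 hb1r ht htb
  have bt' := t3 r b b2 t' hb2 hb2r ht' htb'
  have bX := t4 r b b1 t X hb1 hb1r ht htb htX hXb
  have bY := t4 r b b2 t' Y hb2 hb2r ht' htb' htY hYb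
  -- cross inequalities between the two sides
  have e0 := lev 1 1 _ _ cC1 bB1 (by norm_num)
  have e1 := lev 1 2 _ _ cC1 bb1 (by norm_num)
  have e2 := lev 1 2 _ _ cC1 bb2 (by norm_num)
  have e3 := lev 1 3 _ _ cC1 bt (by norm_num)
  have e4 := lev 1 3 _ _ cC1 bt' (by norm_num)
  have e5 := lev 1 4 _ _ cC1 bX (by norm_num)
  have e6 := lev 1 4 _ _ cC1 bY (by norm_num)
  have e7 := lev 2 1 _ _ cc1 bB1 (by norm_num)
  have e8 := lev 2 2 _ _ cc1 bb1 (by norm_num)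
  have e9 := lev 2 2 _ _ cc1 bb2 (by norm_num)
  have e10 := lev 2 3 _ _ cc1 bt (by norm_num)
  have e11 := lev 2 3 _ _ cc1 bt' (by norm_num)
  have e12 := lev 2 4 _ _ cc1 bY (by norm_num)
  have f7 := lev 2 1 _ _ cc2 bB1 (by norm_num)
  have f8 := lev 2 2 _ _ cc2 bb1 (by norm_num)
  have f9 := lev 2 2 _ _ cc2 bb2 (by norm_num)
  have f10 := lev 2 3 _ _ cc2 bt (by norm_num)
  have f11 := lev 2 3 _ _ cc2 bt' (by norm_num)
  have f12 := lev 2 4 _ _ cc2 bX (by norm_num)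
  have g7 := lev 3 1 _ _ cs bB1 (by norm_num)
  have g8 := lev 3 2 _ _ cs bb1 (by norm_num)
  have g9 := lev 3 2 _ _ cs bb2 (by norm_num)
  have g10 := lev 3 3 _ _ cs bt (by norm_num)
  have g11 := lev 3 3 _ _ cs bt' (by norm_num)
  have g12 := lev 3 4 _ _ cs bY (by norm_num)
  have h7 := lev 3 1 _ _ cs' bB1 (by norm_num)
  have h8 := lev 3 2 _ _ cs' bb1 (by norm_num)
  have h9 := lev 3 2 _ _ cs' bb2 (by norm_num)
  have h10 := lev 3 3 _ _ cs' bt (by norm_num)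
  have h11 := lev 3 3 _ _ cs' bt' (by norm_num)
  have h12 := lev 3 4 _ _ cs' bX (by norm_num)
  have i7 := lev 4 1 _ _ cX bB1 (by norm_num)
  have i9 := lev 4 2 _ _ cX bb2 (by norm_num)
  have i11 := lev 4 3 _ _ cX bt' (by norm_num)
  have j7 := lev 4 1 _ _ cY bB1 (by norm_num)
  have j8 := lev 4 2 _ _ cY bb1 (by norm_num)
  have j10 := lev 4 3 _ _ cY bt (by norm_num)
  -- inequalities inside one side
  have lc : ∀ (k l : ℕ) (x y : V), TT G k c c1 x → TT G l c c2 y → k + l ≤ 7 → x ≠ y := by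
    rintro k l x y h1 h2 h3 rfl
    exact d x hc1 hc2 hc12 h1 h2 h3
  have lb : ∀ (k l : ℕ) (x y : V), TT G k b b1 x → TT G l b b2 y → k + l ≤ 7 → x ≠ y := by
    rintro k l x y h1 h2 h3 rfl
    exact d x hb1 hb2 hb12 h1 h2 h3
  have k1 := lc 1 2 _ _ (t1 c c1) (t2 c c2 s' hs' hsc') (by norm_num)
  have k2 := lc 1 3 _ _ (t1 c c1) (t3 c c2 s' Y hs' hsc' hsY hYc) (by norm_num)
  have k3 := lc 2 1 _ _ (t2 c c1 s hs hsc) (t1 c c2) (by norm_num)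
  have k4 := lc 2 2 _ _ (t2 c c1 s hs hsc) (t2 c c2 s' hs' hsc') (by norm_num)
  have k5 := lc 2 3 _ _ (t2 c c1 s hs hsc) (t3 c c2 s' Y hs' hsc' hsY hYc) (by norm_num)
  have k6 := lc 3 1 _ _ (t3 c c1 s X hs hsc hsX hXc) (t1 c c2) (by norm_num)
  have k7 := lc 3 2 _ _ (t3 c c1 s X hs hsc hsX hXc) (t2 c c2 s' hs' hsc') (by norm_num)
  have k8 := lc 3 3 _ _ (t3 c c1 s X hs hsc hsX hXc) (t3 c c2 s' Y hs' hsc' hsY hYc) (by norm_num)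
  have l1 := lb 1 2 _ _ (t1 b b1) (t2 b b2 t' ht' htb') (by norm_num)
  have l3 := lb 2 1 _ _ (t2 b b1 t ht htb) (t1 b b2) (by norm_num)
  have l4 := lb 2 2 _ _ (t2 b b1 t ht htb) (t2 b b2 t' ht' htb') (by norm_num)
  have l5 := lb 2 3 _ _ (t2 b b1 t ht htb) (t3 b b2 t' Y ht' htb' htY hYb) (by norm_num)
  have l7 := lb 3 2 _ _ (t3 b b1 t X ht htb htX hXb) (t2 b b2 t' ht' htb') (by norm_num)
  -- inequalities with r
  have rc : ∀ (k : ℕ) (v x : V), G.Adj c v → v ≠ r → TT G k c v x → k ≤ 6 → x ≠ r := by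
    rintro k v x h1 h2 h3 h4 rfl
    exact d x h1 hrc.symm h2 h3 (t1 c x) (by omega)
  have rb : ∀ (k : ℕ) (v x : V), G.Adj b v → v ≠ r → TT G k b v x → k ≤ 6 → x ≠ r := by
    rintro k v x h1 h2 h3 h4 rfl
    exact d x h1 hrb.symm h2 h3 (t1 b x) (by omega)
  have m1 := rc 2 _ _ hc1 hc1r (t2 c c1 s hs hsc) (by norm_num)
  have m2 := rc 2 _ _ hc2 hc2r (t2 c c2 s' hs' hsc') (by norm_num)
  have m3 := rc 3 _ _ hc1 hc1r (t3 c c1 s X hs hsc hsX hXc) (by norm_num)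
  have m4 := rc 3 _ _ hc2 hc2r (t3 c c2 s' Y hs' hsc' hsY hYc) (by norm_num)
  have m5 := rb 2 _ _ hb1 hb1r (t2 b b1 t ht htb) (by norm_num)
  have m6 := rb 2 _ _ hb2 hb2r (t2 b b2 t' ht' htb') (by norm_num)
  -- inequalities with c and b
  have n0 : ¬ G.Adj c b := fun h =>
    d b hrc hrb hcb (t2 r c b h hrb.ne') (t1 r b) (by norm_num)
  have n3 := hsX.ne
  have n4 := hsY.ne
  have n5 := htX.ne
  have n6 := htY.ne
  have n7 := hs.ne
  have n8 := hs'.ne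
  have n9 := ht.ne
  have n10 := ht'.ne
  have n11 := hc1.ne
  have n12 := hc2.ne
  have n13 := hb1.ne
  have n14 := hb2.ne
  have n15 := hrc.ne
  have n16 := hrb.ne
  let C : G.Walk r r := .cons hrc (.cons hc1 (.cons hs (.cons hsX (.cons htX.symm
    (.cons ht.symm (.cons hb1.symm (.cons hrb.symm .nil)))))))
  let C' : G.Walk r r := .cons hrc (.cons hc2 (.cons hs' (.cons hsY (.cons htY.symm
    (.cons ht'.symm (.cons hb2.symm (.cons hrb.symm .nil)))))))
  have supp : {w | w ∈ C.support} ∩ {w | w ∈ C'.support} = {c, r, b} := by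
    ext w
    simp only [C, C', SimpleGraph.Walk.support_cons, SimpleGraph.Walk.support_nil, Set.mem_inter_iff,
      Set.mem_ofPred_eq, List.mem_cons, List.not_mem_nil, or_false, Set.mem_insert_iff,
      Set.mem_singleton_iff]
    constructor
    · rintro ⟨rfl | rfl | rfl | rfl | rfl | rfl | rfl | rfl | rfl, h⟩ <;> grind
    · grind
  refine hno ⟨r, c, b, C, C', hcb, hrc, hrb, ?_, ?_, rfl, rfl, ?_, supp⟩
  · rw [SimpleGraph.Walk.cons_isCycle_iff]
    constructor
    · rw [SimpleGraph.Walk.isPath_def]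
      simp only [SimpleGraph.Walk.support_cons, SimpleGraph.Walk.support_nil, List.nodup_cons,
        List.mem_cons, List.not_mem_nil, or_false, not_or, List.nodup_nil, not_false_eq_true]
      grind
    · simp only [SimpleGraph.Walk.edges_cons, SimpleGraph.Walk.edges_nil, List.mem_cons,
        List.not_mem_nil, or_false, not_or, Sym2.eq_iff]
      grind
  · rw [SimpleGraph.Walk.cons_isCycle_iff]
    constructor
    · rw [SimpleGraph.Walk.isPath_def]
      simp only [SimpleGraph.Walk.support_cons, SimpleGraph.Walk.support_nil, List.nodup_cons,
        List.mem_cons, List.not_mem_nil, or_false, not_or, List.nodup_nil, not_false_eq_true]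
      grind
    · simp only [SimpleGraph.Walk.edges_cons, SimpleGraph.Walk.edges_nil, List.mem_cons,
        List.not_mem_nil, or_false, not_or, Sym2.eq_iff]
      grind
  · ext e
    constructor
    · rintro ⟨h1, h2⟩
      induction e with
      | _ u v =>
        have hadj := C.adj_of_mem_edges h1
        have hu : u ∈ ({c, r, b} : Set V) := by
          rw [← supp]
          exact ⟨C.fst_mem_support_of_mem_edges h1, C'.fst_mem_support_of_mem_edges h2⟩
        have hv : v ∈ ({c, r, b} : Set V) := by
          rw [← supp]
          exact ⟨C.snd_mem_support_of_mem_edges h1, C'.snd_mem_support_of_mem_edges h2⟩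
        simp only [Set.mem_insert_iff, Set.mem_singleton_iff] at hu hv ⊢
        exact edge_aux hadj n0 hu hv
    · rintro (rfl | rfl) <;> simp [C, C']

theorem move_good {V : Type*} [Fintype V] (G : SimpleGraph V) [DecidableRel G.Adj]
    (h3 : ∀ v : V, G.degree v = 3) (hg : 8 ≤ G.girth)
    (hno : ¬ ∃ (v x y : V) (C C' : G.Walk v v),
      x ≠ y ∧ G.Adj v x ∧ G.Adj v y ∧
      C.IsCycle ∧ C'.IsCycle ∧ C.length = 8 ∧ C'.length = 8 ∧
      {e | e ∈ C.edges} ∩ {e | e ∈ C'.edges} = {s(v, x), s(v, y)} ∧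
      {w | w ∈ C.support} ∩ {w | w ∈ C'.support} = {x, v, y})
    {k : ℕ} (hk : k ≤ 3) {r : V} {p : Fin k → V} (h : FreePos G r p) :
    ∃ r', G.Adj r r' ∧ GoodPos G r' p := by
  obtain ⟨hr, c, hc, hT⟩ := h
  have near : ∀ x i, G.Adj r x → (p i = x ∨ G.Adj x (p i)) → TT G 2 r x (p i) := by
    intro x i hx hi
    have := hr i
    rcases hi with hi | hi
    · exact Or.inl hi
    · exact Or.inr ⟨_, hi, this, Or.inl rfl⟩
  by_contra! hcon
  have badc : ∀ a, G.Adj c a → ∃ i, TT G 3 c a (p i) := by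
    by_contra! hh
    exact hcon c hc ⟨fun i => ⟨fun hi => hT i (near c i hc (Or.inl hi)),
      fun hi => hT i (near c i hc (Or.inr hi))⟩, hh⟩
  obtain ⟨c1, c2, hc1, hc2, hc12, hc1r, hc2r, -⟩ := nbrs G h3 hc.symm
  obtain ⟨iz, hz⟩ := badc r hc.symm
  obtain ⟨ix, hx⟩ := badc c1 hc1
  obtain ⟨iy, hy⟩ := badc c2 hc2
  have hzx : iz ≠ ix := by
    rintro rfl; exact TT.disj hg hc.symm hc1 hz hx (Ne.symm hc1r) (by norm_num)
  have hzy : iz ≠ iy := by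
    rintro rfl; exact TT.disj hg hc.symm hc2 hz hy (Ne.symm hc2r) (by norm_num)
  have hxy : ix ≠ iy := by
    rintro rfl; exact TT.disj hg hc1 hc2 hx hy hc12 (by norm_num)
  rcases hz with hz | ⟨a, ha, hac, hz⟩
  · exact hr _ hz
  obtain ⟨b, hb, hba, hbc⟩ : ∃ b, G.Adj r b ∧ b ≠ a ∧ b ≠ c := by
    obtain ⟨u, v, hu, hv, huv, hua, hva, -⟩ := nbrs G h3 ha
    by_cases huc : u = c
    · exact ⟨v, hv, hva, fun h => huv (huc.trans h.symm)⟩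
    · exact ⟨u, hu, hua, huc⟩
  have hx4 : TT G 4 r c (p ix) := Or.inr ⟨c1, hc1, hc1r, hx⟩
  have hy4 : TT G 4 r c (p iy) := Or.inr ⟨c2, hc2, hc2r, hy⟩
  have cases3 : ∀ i, i = iz ∨ i = ix ∨ i = iy := by intro i; omega
  have nob : ∀ i, ¬ TT G 2 r b (p i) := by
    intro i hi
    rcases cases3 i with rfl | rfl | rfl
    · exact TT.disj hg ha hb hz hi (Ne.symm hba) (by norm_num)
    · exact TT.disj hg hc hb hx4 hi (Ne.symm hbc) (by norm_num)
    · exact TT.disj hg hc hb hy4 hi (Ne.symm hbc) (by norm_num)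
  have badb : ∀ a, G.Adj b a → ∃ i, TT G 3 b a (p i) := by
    by_contra! hh
    exact hcon b hb ⟨fun i => ⟨fun hi => nob i (near b i hb (Or.inl hi)),
      fun hi => nob i (near b i hb (Or.inr hi))⟩, hh⟩
  obtain ⟨b1, b2, hb1, hb2, hb12, hb1r, hb2r, -⟩ := nbrs G h3 hb.symm
  have notz : ∀ u, G.Adj b u → u ≠ r → ¬ TT G 3 b u (p iz) := fun u hu hur hT =>
    TT.disj hg ha hb hz (l := 4) (Or.inr ⟨u, hu, hur, hT⟩) (Ne.symm hba) (by norm_num)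
  -- full-length description of positions reached through both sides
  have full : ∀ (u u' v w z : V), G.Adj r u → G.Adj r u' → u ≠ u' → G.Adj u v → v ≠ r →
      TT G 3 u v z → TT G 4 r u' z → ∃ s, G.Adj v s ∧ s ≠ u ∧ G.Adj s z ∧ z ≠ v := by
    intro u u' v w z hu hu' huu hv hvr hT hT'
    rcases hT with rfl | ⟨s, hs, hsu, rfl | ⟨z', hz', hzv, rfl | hF⟩⟩
    · exact (TT.disj hg hu hu' (k := 2) (Or.inr ⟨_, hv, hvr, Or.inl rfl⟩) hT' huu
        (by norm_num)).elim
    · exact (TT.disj hg hu hu' (k := 3) (Or.inr ⟨_, hv, hvr, Or.inr ⟨_, hs, hsu, Or.inl rfl⟩⟩)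
        hT' huu (by norm_num)).elim
    · exact ⟨s, hs, hsu, hz', hzv⟩
    · obtain ⟨_, _, _, hF⟩ := hF
      exact hF.elim
  have fin : ∀ b1 b2, G.Adj b b1 → G.Adj b b2 → b1 ≠ b2 → b1 ≠ r → b2 ≠ r →
      TT G 3 b b1 (p ix) → TT G 3 b b2 (p iy) → False := by
    intro b1 b2 hb1 hb2 hb12 hb1r hb2r hX hY
    have hX4 : TT G 4 r b (p ix) := Or.inr ⟨b1, hb1, hb1r, hX⟩
    have hY4 : TT G 4 r b (p iy) := Or.inr ⟨b2, hb2, hb2r, hY⟩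
    obtain ⟨s, hs, hsc, hsX, hXc⟩ := full c b c1 c1 (p ix) hc hb (Ne.symm hbc) hc1 hc1r hx hX4
    obtain ⟨s', hs', hsc', hsY, hYc⟩ := full c b c2 c1 (p iy) hc hb (Ne.symm hbc) hc2 hc2r hy hY4
    obtain ⟨t, ht, htb, htX, hXb⟩ := full b c b1 c1 (p ix) hb hc hbc hb1 hb1r hX hx4
    obtain ⟨t', ht', htb', htY, hYb⟩ := full b c b2 c1 (p iy) hb hc hbc hb2 hb2r hY hy4
    exact no_config G hg hno hc hb (Ne.symm hbc) hc1 hc2 hc1r hc2r hc12 hb1 hb2 hb1r hb2r hb12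
      hs hsc hsX hXc ht htb htX hXb hs' hsc' hsY hYc ht' htb' htY hYb
  obtain ⟨i1, hi1⟩ := badb b1 hb1
  obtain ⟨i2, hi2⟩ := badb b2 hb2
  have hi12 : i1 ≠ i2 := by
    rintro rfl; exact TT.disj hg hb1 hb2 hi1 hi2 hb12 (by norm_num)
  have ha1 : i1 ≠ iz := by rintro rfl; exact notz _ hb1 hb1r hi1
  have ha2 : i2 ≠ iz := by rintro rfl; exact notz _ hb2 hb2r hi2
  have hd : (i1 = ix ∧ i2 = iy) ∨ (i1 = iy ∧ i2 = ix) := by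
    have := cases3 i1
    have := cases3 i2
    grind
  rcases hd with ⟨rfl, rfl⟩ | ⟨rfl, rfl⟩
  · exact fin b1 b2 hb1 hb2 hb12 hb1r hb2r hi1 hi2
  · exact fin b2 b1 hb2 hb1 (Ne.symm hb12) hb2r hb1r hi2 hi1

/-- Let `G` be a 3-regular simple graph of girth at least 8 that does not contain two
cycles of length 8 whose intersection is a path of length 2 (two edges `s(v,x)`, `s(v,y)`
and the three vertices `x, v, y`). Then the cop number of `G` is at least 4. -/
theorem cop_number_ge_four_of_no_two_eight_cycles {V : Type*} [Fintype V]
    (G : SimpleGraph V) [DecidableRel G.Adj]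
    (h3 : ∀ v : V, G.degree v = 3) (hg : 8 ≤ G.girth)
    (hno : ¬ ∃ (v x y : V) (C C' : G.Walk v v),
      x ≠ y ∧ G.Adj v x ∧ G.Adj v y ∧
      C.IsCycle ∧ C'.IsCycle ∧ C.length = 8 ∧ C'.length = 8 ∧
      {e | e ∈ C.edges} ∩ {e | e ∈ C'.edges} = {s(v, x), s(v, y)} ∧
      {w | w ∈ C.support} ∩ {w | w ∈ C'.support} = {x, v, y}) :
    4 ≤ copNumber G := by
  classical
  have hne : Nonempty V := by
    by_contra hV
    have hac : G.IsAcyclic := fun v => (hV ⟨v⟩).elim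
    have := SimpleGraph.girth_eq_zero.2 hac
    omega
  unfold copNumber
  apply le_csInf
  · refine ⟨Fintype.card V, (Fintype.equivFin V).symm, fun p _ => p, fun _ _ _ => Or.inl rfl, ?_⟩
    intro rinit rmove _ cseq rseq h0 _ _ _
    exact ⟨0, Fintype.equivFin V (rseq 0), Or.inl (by simp [h0])⟩
  · intro k hk
    by_contra hlt
    obtain ⟨init, F, hF, hwin⟩ := hk
    have hk3 : k ≤ 3 := by omega
    obtain ⟨c, hc⟩ := exists_uncovered G h3 hg hk3 init
    obtain ⟨r, hcr⟩ : ∃ r, G.Adj c r :=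
      (G.degree_pos_iff_exists_adj _).1 (by have := h3 c; omega)
    have hfree : FreePos G r init := by
      refine ⟨fun i hi => (hc i).2 (hi ▸ hcr), c, hcr.symm, ?_⟩
      rintro i (hi | ⟨w, hw, _, hi | ⟨_, _, _, hi⟩⟩)
      · exact (hc i).1 hi
      · exact (hc i).2 (hi ▸ hw)
      · exact hi
    obtain ⟨r0, -, hr0⟩ := move_good G h3 hg hno hk3 hfree
    let rmove : (Fin k → V) → V → V := fun p r =>
      if h : ∃ r', G.Adj r r' ∧ GoodPos G r' p then h.choose else r
    have hrm : ∀ p r, rmove p r = r ∨ G.Adj r (rmove p r) := by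
      intro p r
      by_cases h : ∃ r', G.Adj r r' ∧ GoodPos G r' p
      · right; simp only [rmove, dif_pos h]; exact h.choose_spec.1
      · left; simp only [rmove, dif_neg h]
    have hrg : ∀ p r, FreePos G r p → GoodPos G (rmove p r) p := by
      intro p r hf
      have h := move_good G h3 hg hno hk3 hf
      simp only [rmove, dif_pos h]
      exact h.choose_spec.2
    let sq : ℕ → (Fin k → V) × V := fun t =>
      Nat.rec (init, r0) (fun _ s => (F s.1 s.2, rmove (F s.1 s.2) s.2)) t
    have hgood : ∀ t, GoodPos G (sq t).2 (sq t).1 := by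
      intro t
      induction t with
      | zero => exact hr0
      | succ t ih => exact hrg _ _ (ih.free (hF _ _))
    obtain ⟨t, i, h⟩ := hwin (fun _ => r0) rmove hrm (fun t => (sq t).1) (fun t => (sq t).2)
      rfl rfl (fun _ => rfl) (fun _ => rfl)
    rcases h with h | h
    · exact ((hgood t).1 i).1 h
    · exact ((hgood t).free (hF _ _)).1 i h
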